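/- arXiv:2207.06468 — 6 statements merged into one kernel-verified Lean document; each statement's English description precedes it below -/
import Mathlib

section
/- Let α ∈ (0,1), let X be a complex Banach space, let (λₙ)_{n≥1} be a strictly increasing sequence of positive real numbers with λₙ → +∞, and let (cₙ)_{n≥1} be a sequence in X with ∑ₙ ‖cₙ‖/λₙ² < ∞. Set 𝒪 := ℂ ∖ ({−λₙ : n ≥ 1} ∪ {−e^{2iαπ}λₙ : n ≥ 1}). Assume there exist real numbers 0 < r₁ < r₂ such that the interval (r₁, r₂) is contained in 𝒪 and ∑ₙ cₙ/((λₙ + z)(λₙ + e^{−2iαπ}z)) = 0 for every real z ∈ (r₁, r₂). Then cₙ = 0 for every n ≥ 1. -/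
open Complex Set Filter

/-- If the series `∑ₙ cₙ/((λₙ + z)(λₙ + e^{-2iαπ} z))` vanishes on a real
interval `(r₁,r₂)` contained in `𝒪 = ℂ ∖ ({-λₙ} ∪ {-e^{2iαπ}λₙ})`, then all
coefficients `cₙ` vanish. -/
theorem jump_series_vanishing_on_interval_implies_coeff_zero
    {X : Type*} [NormedAddCommGroup X] [NormedSpace ℂ X] [CompleteSpace X]
    (α : ℝ) (hα : α ∈ Ioo (0:ℝ) 1)
    (l : ℕ → ℝ) (hl : StrictMono l) (hlpos : ∀ n, 0 < l n)
    (hltop : Tendsto l atTop atTop)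
    (c : ℕ → X) (hc : Summable (fun n => ‖c n‖ / (l n) ^ 2))
    (O : Set ℂ)
    (hO : O = univ \ ((fun n => -(l n : ℂ)) '' univ ∪
      (fun n => -Complex.exp (2 * Complex.I * (α : ℂ) * (Real.pi : ℂ)) * (l n : ℂ)) '' univ))
    (r₁ r₂ : ℝ) (hr₁ : 0 < r₁) (hr₁₂ : r₁ < r₂)
    (hsub : ∀ x ∈ Ioo r₁ r₂, (x : ℂ) ∈ O)
    (hvanish : ∀ x ∈ Ioo r₁ r₂,
      (∑' n, (((l n : ℂ) + (x : ℂ)) *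
        ((l n : ℂ) + Complex.exp (-(2 * Complex.I * (α : ℂ) * (Real.pi : ℂ))) * (x : ℂ)))⁻¹ • c n)
        = 0) :
    ∀ n, c n = 0 := by
  intro n0
  set w : ℂ := Complex.exp (-(2 * Complex.I * (α : ℂ) * (Real.pi : ℂ))) with hw
  have hwn : ‖w‖ = 1 := by
    have : -(2 * Complex.I * (α : ℂ) * (Real.pi : ℂ)) = ((-(2 * α * Real.pi) : ℝ) : ℂ) * Complex.I := by
      push_cast; ring
    rw [hw, this, Complex.norm_exp_ofReal_mul_I]
  set R : ℝ := max r₂ (l n0) + 1 with hR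
  have hRr : r₂ < R := by have := le_max_left r₂ (l n0); linarith
  have hRl : l n0 < R := by have := le_max_right r₂ (l n0); linarith
  have hR0 : 0 < R := (hlpos n0).trans hRl
  obtain ⟨N, hN⟩ := (hltop.eventually_ge_atTop (2 * R)).exists_forall_of_atTop
  have hn0 : n0 < N := by
    by_contra! h
    have := hN n0 h
    linarith
  let d : ℕ → ℂ → ℂ := fun n z => ((l n : ℂ) + z) * ((l n : ℂ) + w * z)
  have hdd : ∀ n, Differentiable ℂ (d n) := fun n => by
    simp only [d]; fun_prop
  have hlow : ∀ n ≥ N, ∀ z ∈ Metric.ball (0:ℂ) R, (l n) ^ 2 / 4 ≤ ‖d n z‖ := by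
    intro n hn z hz
    have hz' : ‖z‖ < R := by simpa using hz
    have h2 := hN n hn
    have hlp := hlpos n
    have key : ∀ u : ℂ, ‖u‖ < R → l n / 2 ≤ ‖(l n : ℂ) + u‖ := by
      intro u hu
      have h := norm_sub_le ((l n : ℂ) + u) u
      rw [add_sub_cancel_right, Complex.norm_real, Real.norm_of_nonneg hlp.le] at h
      linarith
    have ha := key z hz'
    have hb := key (w * z) (by rw [norm_mul, hwn, one_mul]; exact hz')
    simp only [d, norm_mul]
    calc (l n) ^ 2 / 4 = (l n / 2) * (l n / 2) := by ring
      _ ≤ _ := mul_le_mul ha hb (by positivity) (by positivity)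
  have hne : ∀ n ≥ N, ∀ z ∈ Metric.ball (0:ℂ) R, d n z ≠ 0 := by
    intro n hn z hz h
    have := hlow n hn z hz
    rw [h, norm_zero] at this
    have := hlpos n
    have : 0 < (l n)^2 / 4 := by positivity
    linarith
  have hsum : Summable (fun k => 4 * (‖c (k + N)‖ / (l (k + N)) ^ 2)) :=
    ((summable_nat_add_iff N).2 hc).mul_left 4
  have hbd : ∀ k, ∀ z ∈ Metric.ball (0:ℂ) R,
      ‖(d (k + N) z)⁻¹ • c (k + N)‖ ≤ 4 * (‖c (k + N)‖ / (l (k + N)) ^ 2) := by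
    intro k z hz
    have h1 := hlow (k + N) (by omega) z hz
    have hp := hlpos (k + N)
    rw [norm_smul, norm_inv]
    calc ‖d (k + N) z‖⁻¹ * ‖c (k + N)‖ ≤ ((l (k + N)) ^ 2 / 4)⁻¹ * ‖c (k + N)‖ := by
          gcongr
      _ = _ := by field_simp
  let G : ℂ → X := fun z => ∑' k, (d (k + N) z)⁻¹ • c (k + N)
  have hG : DifferentiableOn ℂ G (Metric.ball 0 R) := by
    refine Complex.differentiableOn_tsum_of_summable_norm hsum ?_ Metric.isOpen_ball hbd
    intro k z hz
    exact (((hdd (k + N)) z).inv (hne _ (by omega) z hz)).smul_const _ |>.differentiableWithinAt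
  let H : ℂ → X := fun z => (∏ m ∈ Finset.range N, d m z) • G z +
    ∑ n ∈ Finset.range N, (∏ m ∈ (Finset.range N).erase n, d m z) • c n
  have hprod : ∀ s : Finset ℕ, Differentiable ℂ (fun z => ∏ m ∈ s, d m z) := fun s =>
    Differentiable.fun_finsetProd fun m _ => hdd m
  have hH : DifferentiableOn ℂ H (Metric.ball 0 R) := by
    refine DifferentiableOn.add ((hprod _).differentiableOn.smul hG) ?_
    refine Differentiable.differentiableOn ?_
    exact Differentiable.fun_sum fun n _ => (hprod _).smul_const _
  have hHzero : ∀ x ∈ Ioo r₁ r₂, H (x : ℂ) = 0 := by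
    intro x hx
    have hxb : (x : ℂ) ∈ Metric.ball (0:ℂ) R := by
      have h1 := hx.1
      have h2 := hx.2
      simp only [mem_ball_zero_iff, Complex.norm_real, Real.norm_eq_abs]
      rw [abs_of_pos (by linarith)]
      linarith
    have hdx : ∀ n, d n x ≠ 0 := by
      intro n h
      have hxO := hsub x hx
      rw [hO] at hxO
      apply hxO.2
      rcases mul_eq_zero.1 h with h | h
      · left
        exact ⟨n, mem_univ _, by simp only; linear_combination -h⟩
      · right
        refine ⟨n, mem_univ _, ?_⟩
        have hee : Complex.exp (2 * Complex.I * (α : ℂ) * (Real.pi : ℂ)) * w = 1 := by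
          rw [hw, ← Complex.exp_add, add_neg_cancel, Complex.exp_zero]
        simp only
        linear_combination (-Complex.exp (2 * Complex.I * (α : ℂ) * (Real.pi : ℂ))) * h + (x : ℂ) * hee
    have hs : Summable (fun k => (d (k + N) x)⁻¹ • c (k + N)) :=
      Summable.of_norm_bounded hsum (fun k => hbd k _ hxb)
    have hsplit := Summable.sum_add_tsum_nat_add' (f := fun n => (d n x)⁻¹ • c n) hs
    have hv : ∑' n, (d n x)⁻¹ • c n = 0 := hvanish x hx
    rw [hv] at hsplit
    have hHx : H x = (∏ m ∈ Finset.range N, d m x) •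
        (∑ n ∈ Finset.range N, (d n x)⁻¹ • c n + G x) := by
      simp only [H]
      rw [smul_add, add_comm, Finset.smul_sum]
      congr 1
      refine Finset.sum_congr rfl fun n hn => ?_
      rw [smul_smul, ← Finset.mul_prod_erase _ _ hn]
      congr 1
      field_simp [hdx n]
    rw [hHx]
    have : ∑ n ∈ Finset.range N, (d n x)⁻¹ • c n + G x = 0 := hsplit
    rw [this, smul_zero]
  have hA : AnalyticOnNhd ℂ H (Metric.ball 0 R) := hH.analyticOnNhd Metric.isOpen_ball
  have hz0 : ((((r₁ + r₂) / 2 : ℝ)) : ℂ) ∈ Metric.ball (0:ℂ) R := by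
    simp only [mem_ball_zero_iff, Complex.norm_real, Real.norm_eq_abs]
    rw [abs_of_pos (by linarith)]
    linarith
  have hfreq : ∃ᶠ z in nhdsWithin ((((r₁ + r₂) / 2 : ℝ)) : ℂ) {((((r₁ + r₂) / 2 : ℝ)) : ℂ)}ᶜ,
      H z = 0 := by
    have ht : Tendsto (fun x : ℝ => (x : ℂ)) (nhdsWithin ((r₁ + r₂) / 2) {(r₁ + r₂) / 2}ᶜ)
        (nhdsWithin ((((r₁ + r₂) / 2 : ℝ)) : ℂ) {((((r₁ + r₂) / 2 : ℝ)) : ℂ)}ᶜ) := by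
      refine Complex.continuous_ofReal.continuousAt.continuousWithinAt.tendsto_nhdsWithin ?_
      intro x hx h
      exact hx (Complex.ofReal_injective h)
    refine ht.frequently (Eventually.frequently ?_)
    have : Ioo r₁ r₂ ∈ nhds ((r₁ + r₂) / 2) := Ioo_mem_nhds (by linarith) (by linarith)
    filter_upwards [mem_nhdsWithin_of_mem_nhds this] with x hx using hHzero x hx
  have hEq := hA.eqOn_zero_of_preconnected_of_frequently_eq_zero
    (convex_ball (0:ℂ) R).isPreconnected hz0 hfreq
  have hp : (-(l n0 : ℂ)) ∈ Metric.ball (0:ℂ) R := by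
    simp only [mem_ball_zero_iff, norm_neg, Complex.norm_real, Real.norm_eq_abs]
    rw [abs_of_pos (hlpos n0)]
    exact hRl
  have hfin : H (-(l n0 : ℂ)) = 0 := hEq hp
  have hd0 : d n0 (-(l n0 : ℂ)) = 0 := by simp [d]
  have hmem : n0 ∈ Finset.range N := Finset.mem_range.2 hn0
  have hHn : H (-(l n0 : ℂ)) =
      (∏ m ∈ (Finset.range N).erase n0, d m (-(l n0 : ℂ))) • c n0 := by
    simp only [H]
    rw [Finset.prod_eq_zero hmem hd0, zero_smul, zero_add]
    refine Finset.sum_eq_single n0 (fun n _ hn => ?_) (fun h => absurd hmem h)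
    rw [Finset.prod_eq_zero (Finset.mem_erase.2 ⟨hn.symm, hmem⟩) hd0, zero_smul]
  rw [hHn] at hfin
  refine (smul_eq_zero.1 hfin).resolve_left ?_
  refine Finset.prod_ne_zero_iff.2 fun m hm h => ?_
  have hmn := (Finset.mem_erase.1 hm).1
  apply hmn
  apply hl.injective
  have key : ∀ u : ℂ, ‖u‖ = l n0 → (l m : ℂ) + u = 0 → l m = l n0 := by
    intro u hu h
    rw [← hu, eq_neg_of_add_eq_zero_right h, norm_neg, Complex.norm_real,
      Real.norm_of_nonneg (hlpos m).le]
  have hnn : ‖(-(l n0 : ℂ))‖ = l n0 := by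
    rw [norm_neg, Complex.norm_real, Real.norm_of_nonneg (hlpos n0).le]
  rcases mul_eq_zero.1 h with h | h
  · exact key _ hnn h
  · exact key _ (by rw [norm_mul, hwn, one_mul, hnn]) h
end

section
/- Let α ∈ (0,1), let X be a complex Banach space, let (λₙ)_{n≥1} be a strictly increasing sequence of positive real numbers with λₙ → +∞, and let (cₙ)_{n≥1} be a sequence in X with ∑ₙ ‖cₙ‖/λₙ < ∞. Let S : ℂ → ℂ and G : ℂ → X be entire functions such that G(p) = S(p)·∑ₙ cₙ/(λₙ + p^α) for every p ∈ ℂ∖(−∞,0]. Then for every R > 0 one has S(−R)·∑ₙ cₙ/((λₙ + R^α e^{iαπ})(λₙ + R^α e^{−iαπ})) = 0. -/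
open Complex Set Filter

theorem aux_lower (α : ℝ) (hα : α ∈ Ioo (0:ℝ) 1) (l r θ : ℝ) (hl : 0 < l) (hr : 0 ≤ r)
    (hθ : θ ∈ Icc (-Real.pi) Real.pi) :
    l * Real.sin (α * Real.pi) ≤ ‖(l : ℂ) + (r : ℂ) * Complex.exp (((α * θ : ℝ) : ℂ) * I)‖ := by
  have hpi := Real.pi_pos
  obtain ⟨h0, h1⟩ := hα
  have habs : |θ| ≤ Real.pi := abs_le.2 hθ
  have hcos : Real.cos (α * Real.pi) ≤ Real.cos (α * θ) := by
    rw [← Real.cos_abs (α * θ), abs_mul, abs_of_pos h0]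
    apply Real.cos_le_cos_of_nonneg_of_le_pi
    · positivity
    · nlinarith
    · gcongr
  have hre : ((l : ℂ) + (r : ℂ) * Complex.exp (((α * θ : ℝ) : ℂ) * I)).re
      = l + r * Real.cos (α * θ) := by
    rw [add_re, re_ofReal_mul, exp_ofReal_mul_I_re, ofReal_re]
  have him : ((l : ℂ) + (r : ℂ) * Complex.exp (((α * θ : ℝ) : ℂ) * I)).im
      = r * Real.sin (α * θ) := by
    rw [add_im, im_ofReal_mul, exp_ofReal_mul_I_im, ofReal_im, zero_add]
  refine abs_le_of_sq_le_sq' ?_ (norm_nonneg _) |>.2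
  rw [← Complex.normSq_eq_norm_sq, Complex.normSq_apply, hre, him]
  have e1 := Real.sin_sq_add_cos_sq (α * θ)
  have e2 := Real.sin_sq_add_cos_sq (α * Real.pi)
  have e3 : 0 ≤ l * r * (Real.cos (α * θ) - Real.cos (α * Real.pi)) := by
    have := sub_nonneg.2 hcos
    positivity
  have e4 := sq_nonneg (r + l * Real.cos (α * Real.pi))
  have e5 : (l * Real.sin (α * Real.pi)) ^ 2 = l ^ 2 - l ^ 2 * Real.cos (α * Real.pi) ^ 2 := by
    linear_combination l ^ 2 * e2
  have e6 : (l + r * Real.cos (α * θ)) * (l + r * Real.cos (α * θ))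
      + r * Real.sin (α * θ) * (r * Real.sin (α * θ))
      = l ^ 2 + 2 * l * r * Real.cos (α * θ) + r ^ 2 := by
    linear_combination r ^ 2 * e1
  rw [e5, e6]
  nlinarith

/-- If `S` and `G` are entire and `G(p) = S(p) ∑ₙ cₙ/(λₙ + p^α)` on the cut
plane, then the jump across the branch cut vanishes:
`S(-R) ∑ₙ cₙ/((λₙ + R^α e^{iαπ})(λₙ + R^α e^{-iαπ})) = 0` for all `R > 0`. -/
theorem branch_cut_jump_vanishes
    {X : Type*} [NormedAddCommGroup X] [NormedSpace ℂ X] [CompleteSpace X]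
    (α : ℝ) (hα : α ∈ Ioo (0:ℝ) 1)
    (l : ℕ → ℝ) (hl : StrictMono l) (hlpos : ∀ n, 0 < l n)
    (hltop : Tendsto l atTop atTop)
    (c : ℕ → X) (hc : Summable (fun n => ‖c n‖ / l n))
    (S : ℂ → ℂ) (hS : Differentiable ℂ S)
    (G : ℂ → X) (hG : Differentiable ℂ G)
    (hGS : ∀ p ∈ Complex.slitPlane,
      G p = S p • ∑' n, ((l n : ℂ) + p ^ (α : ℂ))⁻¹ • c n) :
    ∀ R : ℝ, 0 < R →
      S (-(R : ℂ)) •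
        (∑' n, (((l n : ℂ) + (R ^ α : ℝ) * Complex.exp (Complex.I * (α : ℂ) * (Real.pi : ℂ))) *
          ((l n : ℂ) + (R ^ α : ℝ) * Complex.exp (-(Complex.I * (α : ℂ) * (Real.pi : ℂ)))))⁻¹ • c n)
        = 0 := by
  intro R hR
  have hs : 0 < Real.sin (α * Real.pi) := by
    apply Real.sin_pos_of_pos_of_lt_pi
    · exact mul_pos hα.1 Real.pi_pos
    · nlinarith [Real.pi_pos, hα.2]
  have hr : 0 < R ^ α := Real.rpow_pos_of_pos hR α
  set r : ℝ := R ^ α with hrdef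
  set d : ℕ → ℝ → ℂ := fun n θ => (l n : ℂ) + (r : ℂ) * Complex.exp (((α * θ : ℝ) : ℂ) * I) with hd
  have hlow : ∀ n, ∀ θ ∈ Icc (-Real.pi) Real.pi, l n * Real.sin (α * Real.pi) ≤ ‖d n θ‖ :=
    fun n θ hθ => aux_lower α hα (l n) r θ (hlpos n) hr.le hθ
  have hne : ∀ n, ∀ θ ∈ Icc (-Real.pi) Real.pi, d n θ ≠ 0 := fun n θ hθ =>
    norm_pos_iff.1 (lt_of_lt_of_le (mul_pos (hlpos n) hs) (hlow n θ hθ))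
  have hbd : ∀ n, ∀ θ ∈ Icc (-Real.pi) Real.pi,
      ‖(d n θ)⁻¹ • c n‖ ≤ (‖c n‖ / l n) * (Real.sin (α * Real.pi))⁻¹ := by
    intro n θ hθ
    have h1 := mul_pos (hlpos n) hs
    rw [norm_smul, norm_inv]
    calc ‖d n θ‖⁻¹ * ‖c n‖ ≤ (l n * Real.sin (α * Real.pi))⁻¹ * ‖c n‖ := by
          gcongr
          exact hlow n θ hθ
      _ = _ := by rw [mul_inv]; ring
  have hsum := hc.mul_right (Real.sin (α * Real.pi))⁻¹
  have hcont : ContinuousOn (fun θ => ∑' n, (d n θ)⁻¹ • c n) (Icc (-Real.pi) Real.pi) := by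
    refine continuousOn_tsum (fun n => ?_) hsum hbd
    refine ContinuousOn.smul (ContinuousOn.inv₀ ?_ (hne n)) continuousOn_const
    simp only [hd]
    fun_prop
  have hcirc : Continuous (fun θ : ℝ => (R : ℂ) * Complex.exp ((θ : ℂ) * I)) := by fun_prop
  have hEq : EqOn (fun θ : ℝ => G ((R : ℂ) * Complex.exp ((θ : ℂ) * I)))
      (fun θ : ℝ => S ((R : ℂ) * Complex.exp ((θ : ℂ) * I)) • ∑' n, (d n θ)⁻¹ • c n)
      (Icc (-Real.pi) Real.pi) := by
    have hpi := Real.pi_pos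
    have hE : EqOn (fun θ : ℝ => G ((R : ℂ) * Complex.exp ((θ : ℂ) * I)))
      (fun θ : ℝ => S ((R : ℂ) * Complex.exp ((θ : ℂ) * I)) • ∑' n, (d n θ)⁻¹ • c n)
      (Ioo (-Real.pi) Real.pi) := by
      intro θ hθ
      have hz : (R : ℂ) * Complex.exp ((θ : ℂ) * I) ≠ 0 :=
        mul_ne_zero (ofReal_ne_zero.2 hR.ne') (Complex.exp_ne_zero _)
      have harg : arg ((R : ℂ) * Complex.exp ((θ : ℂ) * I)) = θ := by
        rw [Complex.exp_mul_I]
        exact Complex.arg_mul_cos_add_sin_mul_I hR ⟨hθ.1, hθ.2.le⟩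
      have hmem : (R : ℂ) * Complex.exp ((θ : ℂ) * I) ∈ Complex.slitPlane := by
        rw [Complex.mem_slitPlane_iff_arg, harg]
        exact ⟨hθ.2.ne, hz⟩
      have hlog : Complex.log ((R : ℂ) * Complex.exp ((θ : ℂ) * I))
          = (Real.log R : ℂ) + θ * I := by
        rw [Complex.log, harg, norm_mul, Complex.norm_exp_ofReal_mul_I, mul_one,
          Complex.norm_real, Real.norm_of_nonneg hR.le]
      have hpow : ((R : ℂ) * Complex.exp ((θ : ℂ) * I)) ^ (α : ℂ)
          = (r : ℂ) * Complex.exp (((α * θ : ℝ) : ℂ) * I) := by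
        rw [Complex.cpow_def_of_ne_zero hz, hlog, hrdef, Real.rpow_def_of_pos hR, ofReal_exp,
          ← Complex.exp_add]
        congr 1
        push_cast
        ring
      simp only [hGS _ hmem, hpow, hd]
    refine hE.of_subset_closure ?_ ?_ Ioo_subset_Icc_self ?_
    · exact (hG.continuous.comp hcirc).continuousOn
    · exact (hS.continuous.comp hcirc).continuousOn.smul hcont
    · rw [closure_Ioo (by linarith)]
  have hpi := Real.pi_pos
  have m1 : Real.pi ∈ Icc (-Real.pi) Real.pi := ⟨by linarith, le_rfl⟩
  have m2 : -Real.pi ∈ Icc (-Real.pi) Real.pi := ⟨le_rfl, by linarith⟩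
  have p1 := hEq m1
  have p2 := hEq m2
  have x1 : (R : ℂ) * Complex.exp ((Real.pi : ℂ) * I) = -(R : ℂ) := by
    rw [Complex.exp_pi_mul_I]; ring
  have x2 : (R : ℂ) * Complex.exp (((-Real.pi : ℝ) : ℂ) * I) = -(R : ℂ) := by
    rw [ofReal_neg, neg_mul, Complex.exp_neg, Complex.exp_pi_mul_I]; norm_num
  simp only [x1] at p1
  simp only [x2] at p2
  have s1 : Summable (fun n => (d n Real.pi)⁻¹ • c n) :=
    Summable.of_norm_bounded hsum (fun n => hbd n _ m1)
  have s2 : Summable (fun n => (d n (-Real.pi))⁻¹ • c n) :=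
    Summable.of_norm_bounded hsum (fun n => hbd n _ m2)
  have hdiff : S (-(R : ℂ)) • ∑' n, ((d n Real.pi)⁻¹ • c n - (d n (-Real.pi))⁻¹ • c n) = 0 := by
    rw [s1.tsum_sub s2, smul_sub, ← p1, ← p2, sub_self]
  set k : ℂ := -2 * I * r * (Real.sin (α * Real.pi) : ℂ) with hk
  have hk0 : k ≠ 0 := by
    have a1 : (r : ℂ) ≠ 0 := ofReal_ne_zero.2 hr.ne'
    have a2 : (Real.sin (α * Real.pi) : ℂ) ≠ 0 := ofReal_ne_zero.2 hs.ne'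
    exact mul_ne_zero (mul_ne_zero (mul_ne_zero (by norm_num) I_ne_zero) a1) a2
  have hba : ∀ n, d n (-Real.pi) - d n Real.pi = k := by
    intro n
    simp only [hd, hk, Complex.exp_mul_I]
    push_cast
    rw [mul_neg, Complex.cos_neg, Complex.sin_neg]
    ring
  have hterm : ∀ n, (d n Real.pi)⁻¹ • c n - (d n (-Real.pi))⁻¹ • c n
      = k • ((d n Real.pi * d n (-Real.pi))⁻¹ • c n) := by
    intro n
    rw [← sub_smul, smul_smul, ← hba n, inv_sub_inv (hne n _ m1) (hne n _ m2), div_eq_mul_inv]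
  simp only [hterm] at hdiff
  rw [tsum_const_smul'', smul_comm] at hdiff
  have hfin := (smul_eq_zero.1 hdiff).resolve_left hk0
  have y1 : ∀ n, (l n : ℂ) + (r : ℂ) * Complex.exp (I * (α : ℂ) * (Real.pi : ℂ)) = d n Real.pi := by
    intro n
    simp only [hd]
    congr 3
    push_cast
    ring
  have y2 : ∀ n, (l n : ℂ) + (r : ℂ) * Complex.exp (-(I * (α : ℂ) * (Real.pi : ℂ)))
      = d n (-Real.pi) := by
    intro n
    simp only [hd]
    congr 3
    push_cast
    ring
  simp only [y1, y2]
  exact hfin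
end

section
/- Let α ∈ (0,1), let X be a complex Banach space, let (λₙ)_{n≥1} be a strictly increasing sequence of positive real numbers with λₙ → +∞, and let (cₙ)_{n≥1} be a sequence in X with ∑ₙ ‖cₙ‖/λₙ < ∞. Let S : ℂ → ℂ be entire with S not identically zero, and let G : ℂ → X be entire, such that G(p) = S(p)·∑ₙ cₙ/(λₙ + p^α) for every p ∈ ℂ∖(−∞,0]. Then cₙ = 0 for every n ≥ 1, and consequently G vanishes identically. -/
open Complex Set Filter

namespace EntExt

open Topology

lemma gap (l : ℕ → ℝ) (hltop : Tendsto l atTop atTop) (z : ℂ) :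
    ∃ d > 0, ∀ n, (l n : ℂ) + z ≠ 0 → d ≤ ‖(l n : ℂ) + z‖ := by
  have key : ∀ N : ℕ, ∃ d > 0, ∀ n < N, (l n : ℂ) + z ≠ 0 → d ≤ ‖(l n : ℂ) + z‖ := by
    intro N
    induction N with
    | zero => exact ⟨1, one_pos, fun n hn => absurd hn (Nat.not_lt_zero n)⟩
    | succ k ih =>
      obtain ⟨d, hd, h⟩ := ih
      by_cases hk : (l k : ℂ) + z = 0
      · refine ⟨d, hd, fun n hn hne => ?_⟩
        rcases Nat.lt_succ_iff_lt_or_eq.mp hn with h1 | h1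
        · exact h n h1 hne
        · subst h1; exact absurd hk hne
      · refine ⟨min d ‖(l k : ℂ) + z‖, lt_min hd (norm_pos_iff.mpr hk), fun n hn hne => ?_⟩
        rcases Nat.lt_succ_iff_lt_or_eq.mp hn with h1 | h1
        · exact (min_le_left _ _).trans (h n h1 hne)
        · subst h1; exact min_le_right _ _
  obtain ⟨N, hN⟩ := eventually_atTop.mp (hltop.eventually_ge_atTop (1 + ‖z‖))
  obtain ⟨d, hd, h⟩ := key N
  refine ⟨min d 1, lt_min hd one_pos, fun n hne => ?_⟩
  by_cases hn : n < N
  · exact (min_le_left _ _).trans (h n hn hne)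
  · refine (min_le_right _ _).trans ?_
    have h1 := hN n (not_lt.mp hn)
    have h2 : ‖(l n : ℂ)‖ - ‖z‖ ≤ ‖(l n : ℂ) + z‖ := by
      have := norm_sub_le ((l n : ℂ) + z) z
      rw [add_sub_cancel_right] at this
      linarith
    have h3 : l n ≤ ‖(l n : ℂ)‖ := by
      rw [Complex.norm_real]; exact Real.le_norm_self _
    linarith

lemma diff {X : Type*} [NormedAddCommGroup X] [NormedSpace ℂ X] [CompleteSpace X]
    (l : ℕ → ℝ) (hlpos : ∀ n, 0 < l n)
    (c : ℕ → X) (hc : Summable (fun n => ‖c n‖ / l n)) (z₀ : ℂ) (d : ℝ) (hd : 0 < d)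
    (h : ∀ n, c n ≠ 0 → d ≤ ‖(l n : ℂ) + z₀‖) :
    (Summable fun n => ((l n : ℂ) + z₀)⁻¹ • c n) ∧
    DifferentiableAt ℂ (fun z => ∑' n, ((l n : ℂ) + z)⁻¹ • c n) z₀ := by
  set R := ‖z₀‖ + d with hR
  have hb : ∀ n, ∀ z ∈ Metric.ball z₀ (d/2), c n ≠ 0 → d/2 ≤ ‖(l n : ℂ) + z‖ := by
    intro n z hz hn
    have h1 := h n hn
    rw [Metric.mem_ball, dist_eq_norm] at hz
    have h2 := norm_sub_le ((l n : ℂ) + z) (z - z₀)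
    rw [show (l n : ℂ) + z - (z - z₀) = l n + z₀ by ring] at h2
    linarith
  have hbound : ∀ n, ∀ z ∈ Metric.ball z₀ (d/2),
      ‖((l n : ℂ) + z)⁻¹ • c n‖ ≤ (1 + R / (d/2)) * (‖c n‖ / l n) := by
    intro n z hz
    by_cases hn : c n = 0
    · simp [hn]
    have h1 := hb n z hz hn
    rw [Metric.mem_ball, dist_eq_norm] at hz
    have h2 := norm_sub_le ((l n : ℂ) + z) z
    rw [add_sub_cancel_right, Complex.norm_real, Real.norm_of_nonneg (hlpos n).le] at h2
    have h3 : ‖z‖ ≤ R := by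
      have := norm_add_le (z - z₀) z₀
      rw [sub_add_cancel] at this
      linarith
    have hpos : 0 < ‖(l n : ℂ) + z‖ := by linarith
    have hR0 : 0 ≤ R := by positivity
    have h4 : l n ≤ (1 + R / (d/2)) * ‖(l n : ℂ) + z‖ := by
      have : R / (d/2) * (d/2) ≤ R / (d/2) * ‖(l n : ℂ) + z‖ := by gcongr
      rw [div_mul_cancel₀ _ (by positivity)] at this
      linarith
    rw [norm_smul, norm_inv]
    have h5 : ‖(l n : ℂ) + z‖⁻¹ ≤ (1 + R / (d/2)) / l n := by
      rw [inv_le_iff_one_le_mul₀ hpos, div_mul_eq_mul_div, one_le_div (hlpos n)]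
      exact h4
    calc _ ≤ (1 + R / (d/2)) / l n * ‖c n‖ := by gcongr
      _ = _ := by ring
  have hz₀ : z₀ ∈ Metric.ball z₀ (d/2) := Metric.mem_ball_self (by positivity)
  have hs := hc.mul_left (1 + R / (d/2))
  refine ⟨Summable.of_norm_bounded hs fun n => hbound n z₀ hz₀, ?_⟩
  refine (differentiableOn_tsum_of_summable_norm hs (fun n => ?_) Metric.isOpen_ball
    hbound).differentiableAt (Metric.isOpen_ball.mem_nhds hz₀)
  intro z hz
  by_cases hn : c n = 0
  · simp only [hn, smul_zero]; exact differentiableWithinAt_const _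
  have h1 := hb n z hz hn
  have : (l n : ℂ) + z ≠ 0 := by
    rw [← norm_pos_iff]; linarith
  exact (((differentiableAt_id.const_add _).inv this).smul_const _).differentiableWithinAt

lemma im_ne (a : ℝ) (ha : a ∈ Ioo (0:ℝ) 1) (s θ : ℝ) (h1 : -Real.pi ≤ θ) (h2 : θ ≤ Real.pi)
    (x : ℝ) (hx : 0 < x) : (x : ℂ) + exp (a * (s + θ * I)) ≠ 0 := by
  intro h
  have e : (a : ℂ) * (s + θ * I) = ((a * s : ℝ) : ℂ) + ((a * θ : ℝ) : ℂ) * I := by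
    push_cast; ring
  have him := congrArg Complex.im h
  have hre := congrArg Complex.re h
  rw [e] at him hre
  simp only [add_im, ofReal_im, exp_im, add_re, ofReal_re, mul_re, mul_im, I_re, I_im, mul_zero, mul_one, zero_add, add_zero, sub_zero, zero_im, exp_re, zero_re, zero_mul, sub_self] at him hre
  have hpi := Real.pi_pos
  have ha0 := ha.1
  have ha1 := ha.2
  have hlt : |a * θ| < Real.pi := by
    rw [abs_mul, abs_of_pos ha0]
    have := abs_le.mpr ⟨h1, h2⟩
    nlinarith [abs_nonneg θ]
  have hlt' := abs_lt.mp hlt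
  have hsin : Real.sin (a * θ) = 0 := by
    rcases mul_eq_zero.mp him with h | h
    · exact absurd h (Real.exp_pos _).ne'
    · exact h
  have := (Real.sin_eq_zero_iff_of_lt_of_lt hlt'.1 hlt'.2).mp hsin
  rw [this, Real.cos_zero] at hre
  have := Real.exp_pos (a * s)
  linarith

end EntExt

open EntExt in
/-- If `S` is entire and not identically zero, `G` is entire, and
`G(p) = S(p) ∑ₙ cₙ/(λₙ + p^α)` on the cut plane, then all coefficients `cₙ`
vanish and `G ≡ 0`. -/
theorem entire_extension_implies_coeff_zero
    {X : Type*} [NormedAddCommGroup X] [NormedSpace ℂ X] [CompleteSpace X]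
    (α : ℝ) (hα : α ∈ Ioo (0:ℝ) 1)
    (l : ℕ → ℝ) (hl : StrictMono l) (hlpos : ∀ n, 0 < l n)
    (hltop : Tendsto l atTop atTop)
    (c : ℕ → X) (hc : Summable (fun n => ‖c n‖ / l n))
    (S : ℂ → ℂ) (hS : Differentiable ℂ S) (hS0 : ¬ (∀ p : ℂ, S p = 0))
    (G : ℂ → X) (hG : Differentiable ℂ G)
    (hGS : ∀ p ∈ Complex.slitPlane,
      G p = S p • ∑' n, ((l n : ℂ) + p ^ (α : ℂ))⁻¹ • c n) :
    (∀ n, c n = 0) ∧ (∀ p : ℂ, G p = 0) := by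
  have hpi := Real.pi_pos
  suffices hmain : ∀ n, c n = 0 by
    refine ⟨hmain, fun p => ?_⟩
    have hGa : AnalyticOnNhd ℂ G univ := fun z _ => hG.analyticAt z
    have hev : G =ᶠ[nhds 1] 0 := by
      filter_upwards [Complex.isOpen_slitPlane.mem_nhds Complex.one_mem_slitPlane] with p hp
      rw [hGS p hp]; simp [hmain]
    exact hGa.eqOn_zero_of_preconnected_of_eventuallyEq_zero isPreconnected_univ
      (mem_univ 1) hev (mem_univ p)
  set F : ℂ → X := fun z => ∑' n, ((l n : ℂ) + z)⁻¹ • c n with hF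
  have hFd : ∀ z, (∀ n, (l n : ℂ) + z ≠ 0) →
      (Summable fun n => ((l n : ℂ) + z)⁻¹ • c n) ∧ DifferentiableAt ℂ F z := by
    intro z hz
    obtain ⟨d, hd, h⟩ := gap l hltop z
    exact diff l hlpos c hc z d hd fun n _ => h n (hz n)
  -- boundary values
  have hbd : ∀ s θ : ℝ, θ ∈ Icc (-Real.pi) Real.pi →
      G (exp (s + θ * I)) = S (exp (s + θ * I)) • F (exp (α * (s + θ * I))) := by
    intro s θ hθ
    have hEq : EqOn (fun t : ℝ => G (exp (s + t * I)))
        (fun t : ℝ => S (exp (s + t * I)) • F (exp (α * (s + t * I))))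
        (Ioo (-Real.pi) Real.pi) := by
      intro t ht
      have hlog : log (exp (s + t * I)) = s + t * I := by
        apply Complex.log_exp <;> simp [ht.1, ht.2.le]
      have hsl : exp (s + t * I) ∈ Complex.slitPlane := by
        rw [Complex.mem_slitPlane_iff_arg]
        refine ⟨?_, exp_ne_zero _⟩
        rw [← Complex.log_im, hlog]
        simp [ht.2.ne]
      simp only
      rw [hGS _ hsl, Complex.cpow_def_of_ne_zero (exp_ne_zero _), hlog, mul_comm (_ + _ : ℂ) (α : ℂ)]
    have hcl : closure (Ioo (-Real.pi) Real.pi) = Icc (-Real.pi) Real.pi :=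
      closure_Ioo (by linarith)
    have hE := hEq.of_subset_closure (t := Icc (-Real.pi) Real.pi)
      (by
        have := hG.continuous
        fun_prop)
      (by
        have h1 := hS.continuous
        refine ContinuousOn.smul (by fun_prop) ?_
        intro t ht
        have hFc := (hFd (exp (α * (s + t * I)))
          (fun n => im_ne α hα s t ht.1 ht.2 _ (hlpos n))).2.continuousAt
        refine ContinuousAt.continuousWithinAt ?_
        exact ContinuousAt.comp (f := fun t : ℝ => exp (α * (s + t * I))) hFc
          (by fun_prop))
      Ioo_subset_Icc_self hcl.ge
    exact hE hθ
  set ω : ℂ := exp (α * (-2 * Real.pi * I)) with hω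
  have hω0 : ω ≠ 0 := exp_ne_zero _
  set w : ℂ := exp (α * (((0:ℝ):ℂ) + Real.pi * I)) with hw
  set U : Set ℂ := {z | ∀ n, (l n : ℂ) + z ≠ 0 ∧ (l n : ℂ) + ω * z ≠ 0} with hU
  have hωmul : ∀ s : ℝ, ω * exp (α * (s + Real.pi * I)) = exp (α * (s + (-Real.pi : ℝ) * I)) := by
    intro s
    rw [hω, ← Complex.exp_add]
    congr 1
    push_cast; ring
  have hopen : ∀ z, (∀ n, (l n : ℂ) + z ≠ 0) → ∀ᶠ y in nhds z, ∀ n, (l n : ℂ) + y ≠ 0 := by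
    intro z hz
    obtain ⟨d, hd, h⟩ := gap l hltop z
    filter_upwards [Metric.ball_mem_nhds z hd] with y hy n h0
    have h1 := h n (hz n)
    rw [Metric.mem_ball, dist_eq_norm, norm_sub_rev] at hy
    rw [show (l n : ℂ) + z = z - y by linear_combination h0] at h1
    linarith
  have hUo : IsOpen U := by
    rw [isOpen_iff_mem_nhds]
    intro z hz
    have h1 := hopen z fun n => (hz n).1
    have h2 := hopen (ω * z) fun n => (hz n).2
    have hcont : Tendsto (fun y => ω * y) (nhds z) (nhds (ω * z)) :=
      (continuous_const.mul continuous_id).tendsto z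
    filter_upwards [h1, hcont.eventually h2] with y h1 h2 n
    exact ⟨h1 n, h2 n⟩
  have hUc : IsPreconnected U := by
    have hcount : (Uᶜ).Countable := by
      refine ((countable_range fun n => -(l n : ℂ)).union
        (countable_range fun n => -(l n : ℂ) / ω)).mono ?_
      intro z hz
      simp only [hU, mem_compl_iff, mem_setOf_eq, not_forall] at hz
      obtain ⟨n, hn⟩ := hz
      by_cases h1 : (l n : ℂ) + z = 0
      · left; exact ⟨n, by linear_combination -h1⟩
      · right
        have h2 : (l n : ℂ) + ω * z = 0 := by
          by_contra h2; exact hn ⟨h1, h2⟩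
        refine ⟨n, ?_⟩
        simp only
        rw [div_eq_iff hω0]
        linear_combination -h2
    have := (hcount.isPathConnected_compl_of_one_lt_rank (E := ℂ)
      (by rw [Complex.rank_real_complex]; norm_num)).isConnected.isPreconnected
    rwa [compl_compl] at this
  have hwU : w ∈ U := by
    intro n
    refine ⟨im_ne α hα 0 Real.pi (by linarith) le_rfl _ (hlpos n), ?_⟩
    rw [hw, hωmul]
    exact im_ne α hα 0 (-Real.pi) le_rfl (by linarith) _ (hlpos n)
  have hFa : AnalyticOnNhd ℂ F U := by
    refine DifferentiableOn.analyticOnNhd (fun z hz => ?_) hUo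
    exact (hFd z fun n => (hz n).1).2.differentiableWithinAt
  have hFωd : ∀ z, (∀ n, (l n : ℂ) + ω * z ≠ 0) → DifferentiableAt ℂ (fun z => F (ω * z)) z := by
    intro z hz
    exact DifferentiableAt.comp (f := fun z => ω * z) z (hFd (ω * z) hz).2 (by fun_prop)
  have hFωa : AnalyticOnNhd ℂ (fun z => F (ω * z)) U := by
    refine DifferentiableOn.analyticOnNhd (fun z hz => ?_) hUo
    exact (hFωd z fun n => (hz n).2).differentiableWithinAt
  have hSne : ∀ᶠ p in nhdsWithin (-1 : ℂ) {-1}ᶜ, S p ≠ 0 := by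
    rcases (hS.analyticAt (-1)).eventually_eq_zero_or_eventually_ne_zero with h | h
    · exfalso
      apply hS0
      have hSa : AnalyticOnNhd ℂ S univ := fun z _ => hS.analyticAt z
      intro p
      exact hSa.eqOn_zero_of_preconnected_of_eventuallyEq_zero isPreconnected_univ
        (mem_univ (-1)) h (mem_univ p)
    · exact h
  have hexpP : ∀ s : ℝ, exp (s + Real.pi * I) = -exp s := by
    intro s; rw [Complex.exp_add, Complex.exp_pi_mul_I]; ring
  have hexpM : ∀ s : ℝ, exp (s + (-Real.pi : ℝ) * I) = -exp s := by
    intro s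
    rw [Complex.exp_add]; push_cast
    rw [neg_mul, Complex.exp_neg, Complex.exp_pi_mul_I]; norm_num
  have hT1 : Tendsto (fun s : ℝ => -exp (s : ℂ)) (nhdsWithin 0 {0}ᶜ) (nhdsWithin (-1) {-1}ᶜ) := by
    refine tendsto_nhdsWithin_iff.mpr ⟨?_, ?_⟩
    · have : Continuous (fun s : ℝ => -exp (s : ℂ)) := by fun_prop
      have := this.tendsto 0
      simp only [ofReal_zero, Complex.exp_zero] at this
      exact this.mono_left nhdsWithin_le_nhds
    · filter_upwards [self_mem_nhdsWithin] with s hs h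
      apply hs
      have h' : exp (s : ℂ) = 1 := by simpa using h
      have h2 : Real.exp s = 1 := by exact_mod_cast h'
      simpa using h2
  have hT2 : Tendsto (fun s : ℝ => exp (α * (s + Real.pi * I))) (nhdsWithin 0 {0}ᶜ)
      (nhdsWithin w {w}ᶜ) := by
    refine tendsto_nhdsWithin_iff.mpr ⟨?_, ?_⟩
    · have : Continuous (fun s : ℝ => exp (α * (s + Real.pi * I))) := by fun_prop
      exact (this.tendsto 0).mono_left nhdsWithin_le_nhds
    · filter_upwards [self_mem_nhdsWithin] with s hs h
      apply hs
      have h1 : exp (α * (s + Real.pi * I)) = exp (α * (((0:ℝ):ℂ) + Real.pi * I)) := h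
      have h2 := congrArg norm h1
      rw [Complex.norm_exp, Complex.norm_exp, Real.exp_eq_exp] at h2
      simp at h2
      rcases h2 with h2 | h2
      · exact absurd h2 hα.1.ne'
      · exact h2
  have hfreq : ∃ᶠ z in nhdsWithin w {w}ᶜ, F z = F (ω * z) := by
    apply hT2.frequently
    apply Eventually.frequently
    filter_upwards [hT1.eventually hSne] with s hs
    have h1 := hbd s Real.pi ⟨by linarith, le_rfl⟩
    have h2 := hbd s (-Real.pi) ⟨le_rfl, by linarith⟩
    rw [hexpP] at h1
    rw [hexpM] at h2
    rw [hωmul]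
    exact smul_right_injective X hs (h1.symm.trans h2)
  have hEq : EqOn F (fun z => F (ω * z)) U :=
    hFa.eqOn_of_preconnected_of_frequently_eq hFωa hUc hwU hfreq
  -- residues
  have hωl : ∀ m n, (l n : ℂ) + ω * (-(l m : ℂ)) ≠ 0 := by
    intro m n h
    have h1 : ω = ((l n / l m : ℝ) : ℂ) := by
      have : (l m : ℂ) ≠ 0 := by exact_mod_cast (hlpos m).ne'
      push_cast
      rw [eq_div_iff this]
      linear_combination -h
    have e : w * w * ω = 1 := by
      rw [hw, hω, ← Complex.exp_add, ← Complex.exp_add]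
      rw [← Complex.exp_zero]; congr 1; push_cast; ring
    have hq : 0 < l n / l m := div_pos (hlpos n) (hlpos m)
    have h3 : ω = 1 := by
      have hn : ‖ω‖ = 1 := by
        rw [hω, Complex.norm_exp]; simp
      rw [h1, Complex.norm_real, Real.norm_of_nonneg hq.le] at hn
      rw [h1, hn]; simp
    rw [h3, mul_one] at e
    have him : w.im = Real.sin (α * Real.pi) := by
      rw [hw, Complex.exp_im]; simp
    have hsin : 0 < Real.sin (α * Real.pi) :=
      Real.sin_pos_of_pos_of_lt_pi (mul_pos hα.1 hpi) (by nlinarith [hα.2])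
    have : w = 1 ∨ w = -1 := mul_self_eq_one_iff.mp e
    rcases this with h | h <;> rw [h] at him <;> simp at him <;> linarith
  intro m
  set z₀ : ℂ := -(l m : ℂ) with hz₀
  obtain ⟨d, hd, hgap⟩ := gap l hltop z₀
  have hne : ∀ n, n ≠ m → (l n : ℂ) + z₀ ≠ 0 := by
    intro n hn h
    apply hn
    apply hl.injective
    have : (l n : ℂ) = l m := by linear_combination h
    exact_mod_cast this
  set c' : ℕ → X := fun n => if n = m then 0 else c n with hc'
  have hc's : Summable (fun n => ‖c' n‖ / l n) := by
    refine Summable.of_nonneg_of_le (fun n => div_nonneg (norm_nonneg _) (hlpos n).le) (fun n => ?_) hc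
    have := hlpos n
    gcongr
    simp only [hc']
    split_ifs <;> simp
  have hF' := (diff l hlpos c' hc's z₀ d hd (fun n hn => hgap n (hne n (by
    rintro rfl; simp [hc'] at hn)))).2.continuousAt
  have hlim0 : Tendsto (fun z : ℂ => (l m : ℂ) + z) (nhdsWithin z₀ {z₀}ᶜ) (nhds 0) := by
    have : Continuous (fun z : ℂ => (l m : ℂ) + z) := by fun_prop
    have := this.tendsto z₀
    rw [hz₀, add_neg_cancel] at this
    exact this.mono_left nhdsWithin_le_nhds
  have hL1 : Tendsto (fun z : ℂ => ((l m : ℂ) + z) • F (ω * z)) (nhdsWithin z₀ {z₀}ᶜ) (nhds 0) := by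
    have := hlim0.smul ((hFωd z₀ (hωl m)).continuousAt.tendsto.mono_left
      (nhdsWithin_le_nhds (s := {z₀}ᶜ)))
    simpa using this
  have hL2 : Tendsto (fun z : ℂ => c m + ((l m : ℂ) + z) • ∑' n, ((l n : ℂ) + z)⁻¹ • c' n)
      (nhdsWithin z₀ {z₀}ᶜ) (nhds (c m)) := by
    have := (hlim0.smul (hF'.tendsto.mono_left
      (nhdsWithin_le_nhds (s := {z₀}ᶜ)))).const_add (c m)
    simpa using this
  refine (tendsto_nhds_unique (hL1.congr' ?_) hL2).symm
  have hcont : Tendsto (fun y => ω * y) (nhds z₀) (nhds (ω * z₀)) :=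
    (continuous_const.mul continuous_id).tendsto z₀
  filter_upwards [self_mem_nhdsWithin,
    nhdsWithin_le_nhds (hcont.eventually (hopen (ω * z₀) (hωl m))),
    nhdsWithin_le_nhds (Metric.ball_mem_nhds z₀ hd)] with z hz1 hz2 hz3
  have hzm : (l m : ℂ) + z ≠ 0 := by
    intro h
    apply hz1
    rw [mem_singleton_iff, hz₀]
    linear_combination h
  have hzn : ∀ n, (l n : ℂ) + z ≠ 0 := by
    intro n
    by_cases hn : n = m
    · rw [hn]; exact hzm
    intro h0
    have h1 := hgap n (hne n hn)
    rw [Metric.mem_ball, dist_eq_norm, norm_sub_rev] at hz3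
    rw [show (l n : ℂ) + z₀ = z₀ - z by linear_combination h0] at h1
    linarith
  have hzU : z ∈ U := fun n => ⟨hzn n, hz2 n⟩
  have h1 : F z = F (ω * z) := hEq hzU
  rw [← h1]
  have h2 : F z = ((l m : ℂ) + z)⁻¹ • c m + ∑' n, ((l n : ℂ) + z)⁻¹ • c' n := by
    simp only [hF]
    rw [(hFd z hzn).1.tsum_eq_add_tsum_ite m]
    congr 1
    apply tsum_congr
    intro n
    simp only [hc']
    split_ifs <;> simp
  rw [h2, smul_add, smul_inv_smul₀ hzm]
end

section
/- Let α ∈ (0,1), let X be a complex Banach space, let (λₙ)_{n≥1} be a strictly increasing sequence of positive real numbers with λₙ → +∞, and let (cₙ)_{n≥1} be a sequence in X with ∑ₙ ‖cₙ‖/λₙ² < ∞ and with cₙ₀ ≠ 0 for at least one n₀. Then for every ε > 0 there exists r ∈ (0, ε) such that ∑ₙ cₙ/((λₙ + r e^{iαπ})(λₙ + r e^{−iαπ})) ≠ 0. -/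
open Complex Set Filter

lemma aux_bound (w v : ℂ) (hw : ‖w‖ = 1) (hv : ‖v‖ = 1) (a R : ℝ) (hR : 0 < R) (ha : 2 * R ≤ a)
    (z : ℂ) (hz : ‖z‖ ≤ R) : a / 2 ≤ ‖(a : ℂ) + z * w‖ := by
  have h1 : ‖(a : ℂ)‖ = a := by
    rw [Complex.norm_real, Real.norm_eq_abs, abs_of_nonneg (by linarith)]
  have h2 : ‖z * w‖ = ‖z‖ := by rw [norm_mul, hw, mul_one]
  have h3 := norm_sub_le ((a : ℂ) + z * w) (z * w)
  rw [add_sub_cancel_right, h1, h2] at h3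
  linarith

lemma aux_term {X : Type*} [NormedAddCommGroup X] [NormedSpace ℂ X]
    (w v : ℂ) (hw : ‖w‖ = 1) (hv : ‖v‖ = 1) (a R : ℝ) (hR : 0 < R) (ha : 2 * R ≤ a)
    (z : ℂ) (hz : ‖z‖ ≤ R) (x : X) :
    ‖(((a : ℂ) + z * w) * ((a : ℂ) + z * v))⁻¹ • x‖ ≤ 4 * (‖x‖ / a ^ 2) := by
  have h1 := aux_bound w v hw hv a R hR ha z hz
  have h2 := aux_bound v w hv hw a R hR ha z hz
  have ha' : 0 < a := by linarith
  rw [norm_smul, norm_inv, norm_mul]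
  have : (‖(a : ℂ) + z * w‖ * ‖(a : ℂ) + z * v‖)⁻¹ ≤ (a / 2 * (a / 2))⁻¹ := by
    gcongr
  calc _ ≤ (a / 2 * (a / 2))⁻¹ * ‖x‖ := by gcongr
    _ = _ := by field_simp; ring

lemma aux_tail {X : Type*} [NormedAddCommGroup X] [NormedSpace ℂ X] [CompleteSpace X]
    (w v : ℂ) (hw : ‖w‖ = 1) (hv : ‖v‖ = 1)
    (l : ℕ → ℝ) (hltop : Tendsto l atTop atTop)
    (c : ℕ → X) (hc : Summable (fun n => ‖c n‖ / (l n) ^ 2)) (R : ℝ) (hR : 0 < R) :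
    ∃ N, (∀ n, 2 * R ≤ l (n + N)) ∧ Summable (fun n => 4 * (‖c (n + N)‖ / (l (n + N)) ^ 2)) ∧
      ∀ z : ℂ, ‖z‖ ≤ R → Summable (fun n => (((l n : ℂ) + z * w) * ((l n : ℂ) + z * v))⁻¹ • c n) := by
  obtain ⟨N, hN⟩ := (hltop.eventually_ge_atTop (2 * R)).exists_forall_of_atTop
  have hs : Summable (fun n => 4 * (‖c (n + N)‖ / (l (n + N)) ^ 2)) :=
    ((summable_nat_add_iff N).2 hc).mul_left 4
  refine ⟨N, fun n => hN _ (by omega), hs, fun z hz => ?_⟩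
  rw [← summable_nat_add_iff N]
  exact Summable.of_norm_bounded hs fun n =>
    aux_term w v hw hv _ R hR (hN _ (by omega)) z hz _

lemma aux_analytic {X : Type*} [NormedAddCommGroup X] [NormedSpace ℂ X] [CompleteSpace X]
    (w v : ℂ) (hw : ‖w‖ = 1) (hv : ‖v‖ = 1)
    (l : ℕ → ℝ) (hltop : Tendsto l atTop atTop)
    (c : ℕ → X) (hc : Summable (fun n => ‖c n‖ / (l n) ^ 2)) (z : ℂ)
    (hz : ∀ n, c n ≠ 0 → ((l n : ℂ) + z * w) * ((l n : ℂ) + z * v) ≠ 0) :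
    AnalyticAt ℂ (fun z => ∑' n, (((l n : ℂ) + z * w) * ((l n : ℂ) + z * v))⁻¹ • c n) z := by
  set R := ‖z‖ + 1 with hRdef
  have hR : 0 < R := by positivity
  obtain ⟨N, hN, hs, hsum⟩ := aux_tail w v hw hv l hltop c hc R hR
  have hball : Metric.ball (0 : ℂ) R ∈ nhds z :=
    Metric.isOpen_ball.mem_nhds (by simp [hRdef])
  have htail : AnalyticAt ℂ (fun z => ∑' n, (((l (n + N) : ℂ) + z * w) *
      ((l (n + N) : ℂ) + z * v))⁻¹ • c (n + N)) z := by
    refine DifferentiableOn.analyticAt (s := Metric.ball (0 : ℂ) R) ?_ hball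
    refine differentiableOn_tsum_of_summable_norm hs ?_ Metric.isOpen_ball ?_
    · intro n y hy
      have hy' : ‖y‖ ≤ R := by simpa using (mem_ball_zero_iff.1 hy).le
      have h1 := aux_bound w v hw hv _ R hR (hN n) y hy'
      have h2 := aux_bound v w hv hw _ R hR (hN n) y hy'
      have h0 := hN n
      have h1' : (l (n + N) : ℂ) + y * w ≠ 0 := norm_pos_iff.1 (by linarith)
      have h2' : (l (n + N) : ℂ) + y * v ≠ 0 := norm_pos_iff.1 (by linarith)
      apply DifferentiableAt.differentiableWithinAt
      apply DifferentiableAt.smul_const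
      apply DifferentiableAt.inv
      · fun_prop
      · exact mul_ne_zero h1' h2'
    · intro n y hy
      exact aux_term w v hw hv _ R hR (hN n) y (mem_ball_zero_iff.1 hy).le _
  have hfin : AnalyticAt ℂ (fun z => ∑ n ∈ Finset.range N, (((l n : ℂ) + z * w) *
      ((l n : ℂ) + z * v))⁻¹ • c n) z := by
    apply Finset.analyticAt_fun_sum
    intro n _
    by_cases h : c n = 0
    · simp only [h, smul_zero]; exact analyticAt_const
    · refine AnalyticAt.smul (AnalyticAt.inv ?_ (hz n h)) analyticAt_const
      fun_prop
  refine (hfin.add htail).congr ?_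
  filter_upwards [hball] with y hy
  exact (hsum y (mem_ball_zero_iff.1 hy).le).sum_add_tsum_nat_add N

theorem aux_main
    {X : Type*} [NormedAddCommGroup X] [NormedSpace ℂ X] [CompleteSpace X]
    (w v : ℂ) (hw : ‖w‖ = 1) (hv : ‖v‖ = 1) (hwv : w * v = 1) (hvv : v * v ≠ 1)
    (l : ℕ → ℝ) (hl : StrictMono l) (hlpos : ∀ n, 0 < l n)
    (hltop : Tendsto l atTop atTop)
    (c : ℕ → X) (hc : Summable (fun n => ‖c n‖ / (l n) ^ 2))
    (m : ℕ) (hm : c m ≠ 0) (ε : ℝ) (hε : 0 < ε)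
    (H : ∀ r ∈ Ioo (0:ℝ) ε,
      (∑' n, (((l n : ℂ) + (r : ℂ) * w) * ((l n : ℂ) + (r : ℂ) * v))⁻¹ • c n) = 0) : False := by
  have hw0 : w ≠ 0 := left_ne_zero_of_mul_eq_one hwv
  have hv0 : v ≠ 0 := right_ne_zero_of_mul_eq_one hwv
  set F : ℂ → X := fun z => ∑' n, (((l n : ℂ) + z * w) * ((l n : ℂ) + z * v))⁻¹ • c n with hF
  set P : Set ℂ := range (fun n => -(l n : ℂ) * v) ∪ range (fun n => -(l n : ℂ) * w) with hP
  have hPc : P.Countable := (countable_range _).union (countable_range _)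
  have hgood : ∀ z ∈ Pᶜ, ∀ n, (l n : ℂ) + z * w ≠ 0 ∧ (l n : ℂ) + z * v ≠ 0 := by
    intro z hz n
    constructor
    · intro h
      exact hz (Or.inl ⟨n, by linear_combination (-v) * h + z * hwv⟩)
    · intro h
      exact hz (Or.inr ⟨n, by linear_combination (-w) * h + z * hwv⟩)
  have hFa : AnalyticOnNhd ℂ F Pᶜ := fun z hz =>
    aux_analytic w v hw hv l hltop c hc z fun n _ => mul_ne_zero (hgood z hz n).1 (hgood z hz n).2
  have hconn : IsPreconnected Pᶜ :=
    (hPc.isConnected_compl_of_one_lt_rank (by simp [Complex.rank_real_complex])).isPreconnected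
  have h0 : (0 : ℂ) ∈ Pᶜ := by
    rintro (⟨n, hn⟩ | ⟨n, hn⟩) <;>
    · simp [hw0, hv0, (hlpos n).ne'] at hn
  have hfreq : ∃ᶠ z in nhdsWithin (0 : ℂ) {0}ᶜ, F z = 0 := by
    have ht : Tendsto (fun r : ℝ => (r : ℂ)) (nhdsWithin 0 (Ioi 0)) (nhdsWithin (0 : ℂ) {0}ᶜ) := by
      refine tendsto_nhdsWithin_iff.2 ⟨?_, ?_⟩
      · have : Tendsto (fun r : ℝ => (r : ℂ)) (nhds 0) (nhds ((0 : ℝ) : ℂ)) :=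
          Complex.continuous_ofReal.tendsto 0
        simpa using this.mono_left nhdsWithin_le_nhds
      · filter_upwards [self_mem_nhdsWithin] with r hr
        simpa using (ne_of_gt hr)
    refine ht.frequently (Eventually.frequently ?_)
    filter_upwards [Ioo_mem_nhdsGT hε] with r hr
    exact H r hr
  have hzero := hFa.eqOn_zero_of_preconnected_of_frequently_eq_zero hconn h0 hfreq
  -- the remainder
  set d : ℕ → X := fun n => if n = m then 0 else c n with hd
  have hdc : Summable (fun n => ‖d n‖ / (l n) ^ 2) := by
    refine Summable.of_nonneg_of_le (fun n => by positivity) (fun n => ?_) hc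
    by_cases h : n = m
    · simp only [hd, h, if_true, norm_zero, zero_div]; positivity
    · simp [hd, h]
  have hlm : (l m : ℂ) ≠ 0 := by exact_mod_cast (hlpos m).ne'
  set z₀ : ℂ := -(l m : ℂ) * v with hz₀
  have hw₀ : (l m : ℂ) + z₀ * w = 0 := by rw [hz₀]; linear_combination (-(l m : ℂ)) * hwv
  have hv₀ : (l m : ℂ) + z₀ * v ≠ 0 := by
    intro h
    apply hvv
    apply mul_left_cancel₀ hlm
    rw [hz₀] at h
    linear_combination -h
  have hG := aux_analytic w v hw hv l hltop d hdc z₀ (by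
    intro n hn
    have hnm : n ≠ m := by rintro rfl; simp [hd] at hn
    refine mul_ne_zero ?_ ?_
    · intro h
      apply hnm
      apply hl.injective
      have : (l n : ℂ) = l m := by linear_combination h - hw₀
      exact_mod_cast this
    · intro h
      apply hnm
      apply hl.injective
      have : (l n : ℂ) = l m * (v * v) := by rw [hz₀] at h; linear_combination h
      have := congrArg norm this
      rwa [norm_mul, norm_mul, hv, Complex.norm_real, Complex.norm_real, Real.norm_of_nonneg (hlpos n).le,
        Real.norm_of_nonneg (hlpos m).le, mul_one, mul_one] at this)
  set G : ℂ → X := fun z => ∑' n, (((l n : ℂ) + z * w) * ((l n : ℂ) + z * v))⁻¹ • d n with hGdef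
  have hsplit : ∀ z, F z = (((l m : ℂ) + z * w) * ((l m : ℂ) + z * v))⁻¹ • c m + G z := by
    intro z
    obtain ⟨N, -, -, hs⟩ := aux_tail w v hw hv l hltop c hc (‖z‖ + 1) (by positivity)
    simp only [hF, hGdef]
    rw [(hs z (by linarith)).tsum_eq_add_tsum_ite m]
    congr 1
    refine tsum_congr fun n => ?_
    by_cases h : n = m <;> simp [hd, h]
  set K : ℂ → X := fun z => ((l m : ℂ) + z * v)⁻¹ • c m + ((l m : ℂ) + z * w) • G z with hK
  have hKz : ∀ z ∈ Pᶜ, K z = 0 := by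
    intro z hz
    obtain ⟨h1, h2⟩ := hgood z hz m
    have h3 : F z = 0 := hzero hz
    rw [hsplit] at h3
    have h4 := congrArg (fun x => ((l m : ℂ) + z * w) • x) h3
    simp only [smul_add, smul_smul, smul_zero] at h4
    rw [mul_inv, mul_inv_cancel_left₀ h1] at h4
    exact h4
  have hKc : ContinuousAt K z₀ := by
    refine ContinuousAt.add (ContinuousAt.smul (ContinuousAt.inv₀ (by fun_prop) hv₀)
      continuousAt_const) (ContinuousAt.smul (by fun_prop) hG.continuousAt)
  have hdense : Dense Pᶜ := hPc.dense_compl ℝ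
  have hKz₀ : K z₀ = 0 := by
    by_contra hne
    have := hKc.eventually_ne hne
    obtain ⟨y, hy, hy2⟩ := (mem_closure_iff_frequently.1 (hdense z₀)).and_eventually this |>.exists
    exact hy2 (hKz y hy)
  simp only [hK, hw₀, zero_smul, add_zero, smul_eq_zero, inv_eq_zero] at hKz₀
  exact hKz₀.elim hv₀ hm

/-- If not all coefficients `cₙ` vanish, then for every `ε > 0` there exists
`r ∈ (0, ε)` at which `∑ₙ cₙ/((λₙ + r e^{iαπ})(λₙ + r e^{-iαπ})) ≠ 0`. -/
theorem sum_nonvanishing_near_zero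
    {X : Type*} [NormedAddCommGroup X] [NormedSpace ℂ X] [CompleteSpace X]
    (α : ℝ) (hα : α ∈ Ioo (0:ℝ) 1)
    (l : ℕ → ℝ) (hl : StrictMono l) (hlpos : ∀ n, 0 < l n)
    (hltop : Tendsto l atTop atTop)
    (c : ℕ → X) (hc : Summable (fun n => ‖c n‖ / (l n) ^ 2))
    (hne : ∃ n₀, c n₀ ≠ 0) :
    ∀ ε : ℝ, 0 < ε → ∃ r ∈ Ioo (0:ℝ) ε,
      (∑' n, (((l n : ℂ) + (r : ℂ) * Complex.exp (Complex.I * (α : ℂ) * (Real.pi : ℂ))) *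
        ((l n : ℂ) + (r : ℂ) * Complex.exp (-(Complex.I * (α : ℂ) * (Real.pi : ℂ)))))⁻¹ • c n)
        ≠ 0 := by
  intro ε hε
  obtain ⟨m, hm⟩ := hne
  by_contra! H
  have e1 : Complex.I * (α : ℂ) * (Real.pi : ℂ) = ((α * Real.pi : ℝ) : ℂ) * Complex.I := by
    push_cast; ring
  have e2 : -(Complex.I * (α : ℂ) * (Real.pi : ℂ)) = ((-(α * Real.pi) : ℝ) : ℂ) * Complex.I := by
    push_cast; ring
  refine aux_main (Complex.exp (Complex.I * (α : ℂ) * (Real.pi : ℂ)))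
    (Complex.exp (-(Complex.I * (α : ℂ) * (Real.pi : ℂ)))) ?_ ?_ ?_ ?_ l hl hlpos hltop c hc m hm ε hε H
  · rw [e1, Complex.norm_exp_ofReal_mul_I]
  · rw [e2, Complex.norm_exp_ofReal_mul_I]
  · rw [← Complex.exp_add, add_neg_cancel, Complex.exp_zero]
  · intro h
    have hwv : Complex.exp (Complex.I * (α : ℂ) * (Real.pi : ℂ)) *
        Complex.exp (-(Complex.I * (α : ℂ) * (Real.pi : ℂ))) = 1 := by
      rw [← Complex.exp_add, add_neg_cancel, Complex.exp_zero]
    have h2 := mul_right_cancel₀ (Complex.exp_ne_zero _) (h.trans hwv.symm)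
    rw [e2, e1] at h2
    have h3 := congrArg Complex.im h2
    rw [Complex.exp_ofReal_mul_I_im, Complex.exp_ofReal_mul_I_im, Real.sin_neg] at h3
    have := Real.sin_pos_of_pos_of_lt_pi (mul_pos hα.1 Real.pi_pos)
      (by nlinarith [hα.2, Real.pi_pos])
    linarith
end

section
/- Let α ∈ (0,1), let (λₙ)_{n≥1} be a strictly increasing sequence of positive real numbers with λₙ → +∞, and let (cₙ)_{n≥1} be complex numbers with ∑ₙ |cₙ|/λₙ < ∞, not all equal to zero. Let S : ℂ → ℂ and G : ℂ → ℂ be entire functions such that G(p) = S(p)·∑ₙ cₙ/(λₙ + p^α) for every p ∈ ℂ∖(−∞,0]. Then S vanishes identically on ℂ. -/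
open Complex Set Filter

lemma aux_diff (l : ℕ → ℝ) (hlpos : ∀ n, 0 < l n) (hltop : Tendsto l atTop atTop)
    (c : ℕ → ℂ) (hc : Summable (fun n => ‖c n‖ / l n)) (z0 : ℂ)
    (hz : ∀ n, c n ≠ 0 → (l n : ℂ) + z0 ≠ 0) :
    Summable (fun n => c n / ((l n : ℂ) + z0)) ∧
    ∃ s : Set ℂ, IsOpen s ∧ z0 ∈ s ∧
      DifferentiableOn ℂ (fun z => ∑' n, c n / ((l n : ℂ) + z)) s := by
  classical
  have hge : ∀ n, l n - ‖z0‖ ≤ ‖(l n : ℂ) + z0‖ := by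
    intro n
    have h := norm_sub_norm_le (l n : ℂ) (-z0)
    rw [norm_neg, sub_neg_eq_add, Complex.norm_real, Real.norm_of_nonneg (hlpos n).le] at h
    exact h
  have hd : ∃ d : ℝ, 0 < d ∧ ∀ n, c n ≠ 0 → d ≤ ‖(l n : ℂ) + z0‖ := by
    let g : ℕ → ℝ := fun n => if c n = 0 then l n else ‖(l n : ℂ) + z0‖
    have hg : Tendsto g cofinite atTop := by
      rw [Nat.cofinite_eq_atTop]
      refine tendsto_atTop_mono (f := fun n => l n + (-‖z0‖)) ?_
        (tendsto_atTop_add_const_right _ _ hltop)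
      intro n
      simp only [g]
      split_ifs
      · linarith [norm_nonneg z0]
      · linarith [hge n]
    obtain ⟨m, hm⟩ := hg.exists_forall_le
    refine ⟨g m, ?_, ?_⟩
    · simp only [g]
      split_ifs with h
      · exact hlpos m
      · exact norm_pos_iff.2 (hz m h)
    · intro n hn
      have := hm n
      simpa only [g, if_neg hn] using this
  obtain ⟨d, hd0, hd⟩ := hd
  have hsum : Summable (fun n => 2 * (‖c n‖ / ‖(l n : ℂ) + z0‖)) := by
    refine Summable.mul_left _ ?_
    refine Summable.of_norm_bounded_eventually_nat (hc.mul_left 2) ?_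
    filter_upwards [hltop.eventually_ge_atTop (2 * ‖z0‖)] with n hn
    have h1 : l n / 2 ≤ ‖(l n : ℂ) + z0‖ := by linarith [hge n]
    have h2 := hlpos n
    rw [Real.norm_of_nonneg (by positivity)]
    calc ‖c n‖ / ‖(l n : ℂ) + z0‖ ≤ ‖c n‖ / (l n / 2) := by gcongr
      _ = 2 * (‖c n‖ / l n) := by field_simp
  have hlow : ∀ w ∈ Metric.ball z0 (d / 2), ∀ n, c n ≠ 0 →
      ‖(l n : ℂ) + z0‖ / 2 ≤ ‖(l n : ℂ) + w‖ := by
    intro w hw n hn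
    have h1 : ‖z0 - w‖ < d / 2 := by
      rw [← dist_eq_norm, dist_comm]; exact hw
    have h2 := hd n hn
    have h3 : ‖(l n : ℂ) + z0‖ ≤ ‖(l n : ℂ) + w‖ + ‖z0 - w‖ := by
      refine le_trans (le_of_eq ?_) (norm_add_le _ _)
      congr 1; ring
    linarith
  have hb : ∀ (n : ℕ) (w : ℂ), w ∈ Metric.ball z0 (d / 2) →
      ‖c n / ((l n : ℂ) + w)‖ ≤ 2 * (‖c n‖ / ‖(l n : ℂ) + z0‖) := by
    intro n w hw
    by_cases hn : c n = 0
    · simp [hn]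
    have h1 := hlow w hw n hn
    have h2 : 0 < ‖(l n : ℂ) + z0‖ := norm_pos_iff.2 (hz n hn)
    rw [norm_div]
    calc ‖c n‖ / ‖(l n : ℂ) + w‖ ≤ ‖c n‖ / (‖(l n : ℂ) + z0‖ / 2) := by gcongr
      _ = 2 * (‖c n‖ / ‖(l n : ℂ) + z0‖) := by field_simp
  have hmem : z0 ∈ Metric.ball z0 (d / 2) := Metric.mem_ball_self (by linarith)
  refine ⟨Summable.of_norm_bounded hsum (fun n => hb n z0 hmem), _, Metric.isOpen_ball, hmem, ?_⟩
  refine differentiableOn_tsum_of_summable_norm hsum ?_ Metric.isOpen_ball hb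
  intro n w hw
  by_cases hn : c n = 0
  · simp only [hn, zero_div]; exact differentiableWithinAt_const _
  have h1 := hlow w hw n hn
  have h2 : 0 < ‖(l n : ℂ) + z0‖ := norm_pos_iff.2 (hz n hn)
  have h3 : (l n : ℂ) + w ≠ 0 := norm_pos_iff.1 (by linarith)
  exact ((differentiableAt_const _).div ((differentiableAt_const _).add differentiableAt_id)
    h3).differentiableWithinAt

lemma aux_an (l : ℕ → ℝ) (hlpos : ∀ n, 0 < l n) (hltop : Tendsto l atTop atTop)
    (c : ℕ → ℂ) (hc : Summable (fun n => ‖c n‖ / l n)) (z0 : ℂ)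
    (hz : ∀ n, c n ≠ 0 → (l n : ℂ) + z0 ≠ 0) :
    AnalyticAt ℂ (fun z => ∑' n, c n / ((l n : ℂ) + z)) z0 := by
  obtain ⟨s, hs, hz0, h⟩ := (aux_diff l hlpos hltop c hc z0 hz).2
  exact h.analyticAt (hs.mem_nhds hz0)

theorem time_component_vanishes
    (α : ℝ) (hα : α ∈ Ioo (0:ℝ) 1)
    (l : ℕ → ℝ) (hl : StrictMono l) (hlpos : ∀ n, 0 < l n)
    (hltop : Tendsto l atTop atTop)
    (c : ℕ → ℂ) (hc : Summable (fun n => ‖c n‖ / l n))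
    (hne : ∃ n₀, c n₀ ≠ 0)
    (S : ℂ → ℂ) (hS : Differentiable ℂ S)
    (G : ℂ → ℂ) (hG : Differentiable ℂ G)
    (hGS : ∀ p ∈ Complex.slitPlane,
      G p = S p * ∑' n, c n / ((l n : ℂ) + p ^ (α : ℂ))) :
    ∀ p : ℂ, S p = 0 := by
  classical
  obtain ⟨hα0, hα1⟩ := hα
  obtain ⟨n₀, hn₀⟩ := hne
  have hpi := Real.pi_pos
  by_contra hcon
  push Not at hcon
  obtain ⟨q, hq⟩ := hcon
  set F : ℂ → ℂ := fun z => ∑' n, c n / ((l n : ℂ) + z) with hF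
  -- analytic off the negative axis
  have hFim : ∀ z : ℂ, z.im ≠ 0 → AnalyticAt ℂ F z := by
    intro z hz
    refine aux_an l hlpos hltop c hc z ?_
    intro n _ h
    apply hz
    have := congrArg Complex.im h
    simpa using this
  -- the exponential parametrisation
  have hGSe : ∀ x θ : ℝ, -Real.pi < θ → θ < Real.pi →
      G (exp (x + θ * I)) = S (exp (x + θ * I)) * F (exp (α * (x + θ * I))) := by
    intro x θ h1 h2
    have hlog : log (exp (x + θ * I)) = x + θ * I :=
      Complex.log_exp (by simpa using h1) (by simpa using h2.le)
    have harg : (exp (x + θ * I)) ∈ Complex.slitPlane := by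
      rw [Complex.mem_slitPlane_iff_arg]
      refine ⟨?_, Complex.exp_ne_zero _⟩
      rw [← Complex.log_im, hlog]
      simpa using h2.ne
    rw [hGS _ harg, Complex.cpow_def_of_ne_zero (Complex.exp_ne_zero _), hlog,
      mul_comm ((x : ℂ) + θ * I)]
  have him : ∀ x θ : ℝ, (exp (α * (x + θ * I))).im = Real.exp (α * x) * Real.sin (α * θ) := by
    intro x θ
    rw [Complex.exp_im]; simp
  have hsin : 0 < Real.sin (α * Real.pi) :=
    Real.sin_pos_of_pos_of_lt_pi (by positivity) (by nlinarith)
  have hcts : ∀ x θ : ℝ, Real.sin (α * θ) ≠ 0 →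
      ContinuousAt (fun t : ℝ => S (exp (x + t * I)) * F (exp (α * (x + t * I)))) θ := by
    intro x θ hs
    have h1 : ContinuousAt F (exp (α * (x + θ * I))) := by
      refine (hFim _ ?_).continuousAt
      rw [him]
      exact mul_ne_zero (Real.exp_pos _).ne' hs
    have h2 : ContinuousAt (fun t : ℝ => exp (α * (x + t * I))) θ := by fun_prop
    have h3 : ContinuousAt (fun t : ℝ => S (exp (x + t * I))) θ :=
      (hS.continuous.comp (by fun_prop : Continuous fun t : ℝ => exp (x + t * I))).continuousAt
    exact h3.mul (ContinuousAt.comp (f := fun t : ℝ => exp (α * (x + t * I))) h1 h2)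
  have hctsG : ∀ x : ℝ, Continuous (fun t : ℝ => G (exp (x + t * I))) := fun x =>
    hG.continuous.comp (by fun_prop : Continuous fun t : ℝ => exp (x + t * I))
  have hup : ∀ x : ℝ, G (exp (x + Real.pi * I)) =
      S (exp (x + Real.pi * I)) * F (exp (α * (x + Real.pi * I))) := by
    intro x
    refine tendsto_nhds_unique (f := fun t : ℝ => G (exp (x + t * I)))
      (l := nhdsWithin Real.pi (Iio Real.pi))
      ((hctsG x).continuousAt.tendsto.mono_left nhdsWithin_le_nhds) ?_
    refine ((hcts x Real.pi hsin.ne').tendsto.mono_left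
      (nhdsWithin_le_nhds (s := Iio Real.pi))).congr' ?_
    filter_upwards [Ioo_mem_nhdsLT (show -Real.pi < Real.pi by linarith)] with t ht
    exact (hGSe x t ht.1 ht.2).symm
  have hdn : ∀ x : ℝ, G (exp (x + (-Real.pi : ℝ) * I)) =
      S (exp (x + (-Real.pi : ℝ) * I)) * F (exp (α * (x + (-Real.pi : ℝ) * I))) := by
    intro x
    have hs : Real.sin (α * (-Real.pi)) ≠ 0 := by
      rw [mul_neg, Real.sin_neg]; exact (neg_neg_of_pos hsin).ne
    refine tendsto_nhds_unique (f := fun t : ℝ => G (exp (x + t * I)))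
      (l := nhdsWithin (-Real.pi) (Ioi (-Real.pi)))
      ((hctsG x).continuousAt.tendsto.mono_left nhdsWithin_le_nhds) ?_
    refine ((hcts x (-Real.pi) hs).tendsto.mono_left
      (nhdsWithin_le_nhds (s := Ioi (-Real.pi)))).congr' ?_
    filter_upwards [Ioo_mem_nhdsGT (show -Real.pi < Real.pi by linarith)] with t ht
    exact (hGSe x t ht.1 ht.2).symm
  have heup : ∀ x : ℝ, exp (x + Real.pi * I) = -exp x := by
    intro x; rw [Complex.exp_add, Complex.exp_pi_mul_I]; ring
  have hedn : ∀ x : ℝ, exp (x + (-Real.pi : ℝ) * I) = -exp x := by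
    intro x
    rw [Complex.exp_add]; push_cast
    rw [neg_mul, Complex.exp_neg, Complex.exp_pi_mul_I]; norm_num
  set ω : ℂ := exp (((-(2 * Real.pi * α) : ℝ) : ℂ) * I) with hω
  have hω0 : ω ≠ 0 := Complex.exp_ne_zero _
  have hrot : ∀ x : ℝ, exp (α * (x + (-Real.pi : ℝ) * I)) = ω * exp (α * (x + Real.pi * I)) := by
    intro x
    rw [hω, ← Complex.exp_add]; congr 1; push_cast; ring
  have hkey : ∀ x : ℝ, S (-exp x) ≠ 0 →
      F (exp (α * (x + Real.pi * I))) = F (ω * exp (α * (x + Real.pi * I))) := by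
    intro x hx
    have h1 := hup x
    have h2 := hdn x
    rw [heup] at h1
    rw [hedn, hrot, h1] at h2
    exact mul_left_cancel₀ hx h2
  -- S nonzero near -1
  have hSne : ∀ᶠ z in nhdsWithin (-1 : ℂ) {-1}ᶜ, S z ≠ 0 := by
    have hSan : AnalyticOnNhd ℂ S univ := fun z _ => hS.analyticAt z
    rcases (hS.analyticAt (-1)).eventually_eq_zero_or_eventually_ne_zero with h | h
    · exfalso
      exact hq (hSan.eqOn_zero_of_preconnected_of_eventuallyEq_zero isPreconnected_univ
        (mem_univ _) h (mem_univ q))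
    · exact h
  have hxne : ∀ᶠ x : ℝ in nhdsWithin 0 (Ioi 0), S (-exp x) ≠ 0 := by
    have ht : Tendsto (fun x : ℝ => -exp (x : ℂ)) (nhdsWithin 0 (Ioi 0))
        (nhdsWithin (-1 : ℂ) {-1}ᶜ) := by
      refine tendsto_nhdsWithin_iff.2 ⟨?_, ?_⟩
      · have : Continuous (fun x : ℝ => -exp (x : ℂ)) := by fun_prop
        have := this.tendsto 0
        simp only [ofReal_zero, Complex.exp_zero] at this
        exact this.mono_left nhdsWithin_le_nhds
      · filter_upwards [self_mem_nhdsWithin] with x hx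
        simp only [mem_compl_iff, mem_singleton_iff, neg_inj]
        intro h
        rw [← Complex.ofReal_exp] at h
        have h' : Real.exp x = 1 := by exact_mod_cast h
        rw [Real.exp_eq_one_iff] at h'
        exact (ne_of_gt hx) h'
    exact ht.eventually hSne
  set z1 : ℂ := exp (α * (((0:ℝ) : ℂ) + Real.pi * I)) with hz1
  have hzt : Tendsto (fun x : ℝ => exp (α * (x + Real.pi * I))) (nhdsWithin 0 (Ioi 0))
      (nhdsWithin z1 {z1}ᶜ) := by
    refine tendsto_nhdsWithin_iff.2 ⟨?_, ?_⟩
    · have : Continuous (fun x : ℝ => exp (α * (x + Real.pi * I))) := by fun_prop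
      exact (this.tendsto 0).mono_left nhdsWithin_le_nhds
    · filter_upwards [self_mem_nhdsWithin] with x hx
      simp only [mem_compl_iff, mem_singleton_iff]
      intro h
      have h' := congrArg (fun z => ‖z‖) h
      simp only [hz1, Complex.norm_exp] at h'
      rw [Real.exp_eq_exp] at h'
      simp at h'
      rcases h' with h' | h'
      · exact hα0.ne' h'
      · exact (ne_of_gt hx) h'
  have hfreq : ∃ᶠ z in nhdsWithin z1 {z1}ᶜ, F z = F (ω * z) := by
    refine hzt.frequently (Eventually.frequently ?_)
    filter_upwards [hxne] with x hx using hkey x hx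
  -- identity theorem
  set B : Set ℂ := range (fun n => -(l n : ℂ)) ∪ range (fun n => ω⁻¹ * -(l n : ℂ)) with hB
  have hBc : B.Countable := (countable_range _).union (countable_range _)
  have hconn : IsPreconnected Bᶜ := by
    refine (hBc.isPathConnected_compl_of_one_lt_rank ?_).isConnected.isPreconnected
    rw [Complex.rank_real_complex]; norm_num
  have hFan : AnalyticOnNhd ℂ F Bᶜ := by
    intro z hz
    refine aux_an l hlpos hltop c hc z ?_
    intro n _ h
    exact hz (Or.inl ⟨n, (eq_neg_of_add_eq_zero_right h).symm⟩)
  have hFωan : AnalyticOnNhd ℂ (fun z => F (ω * z)) Bᶜ := by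
    intro z hz
    have : AnalyticAt ℂ F (ω * z) := by
      refine aux_an l hlpos hltop c hc (ω * z) ?_
      intro n _ h
      refine hz (Or.inr ⟨n, ?_⟩)
      simp only
      rw [← eq_neg_of_add_eq_zero_right h, inv_mul_cancel_left₀ hω0]
    exact AnalyticAt.comp (f := fun z => ω * z) this (analyticAt_const.mul analyticAt_id)
  have hz1im : z1.im ≠ 0 := by
    rw [hz1, him]; exact mul_ne_zero (Real.exp_pos _).ne' hsin.ne'
  have hωz1im : (ω * z1).im ≠ 0 := by
    rw [hz1, ← hrot, him, mul_neg, Real.sin_neg]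
    exact mul_ne_zero (Real.exp_pos _).ne' (neg_neg_of_pos hsin).ne
  have hz1B : z1 ∈ Bᶜ := by
    rintro (⟨n, hn⟩ | ⟨n, hn⟩)
    · apply hz1im; rw [← hn]; simp
    · apply hωz1im; rw [← hn]; simp only; rw [mul_inv_cancel_left₀ hω0]; simp
  have hEq : EqOn F (fun z => F (ω * z)) Bᶜ :=
    hFan.eqOn_of_preconnected_of_frequently_eq hFωan hconn hz1B hfreq
  -- the pole
  set a : ℂ := -(l n₀ : ℂ) with ha
  have hωne : ∀ r s : ℝ, 0 < r → 0 < s → (r : ℂ) + ω * -(s : ℂ) ≠ 0 := by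
    intro r s hr hs h
    have h1 : ω = ((r / s : ℝ) : ℂ) := by
      have : (s : ℂ) ≠ 0 := by exact_mod_cast hs.ne'
      push_cast
      rw [eq_div_iff this]
      linear_combination -h
    have hsq : ω = exp (((-(Real.pi * α) : ℝ) : ℂ) * I) ^ 2 := by
      rw [hω, ← Complex.exp_nat_mul]; congr 1; push_cast; ring
    have hnorm : ‖ω‖ = 1 := Complex.norm_exp_ofReal_mul_I _
    have hrs : r / s = 1 := by
      rw [h1, Complex.norm_real, Real.norm_of_nonneg (by positivity)] at hnorm
      exact hnorm
    rw [hrs, hsq] at h1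
    have h2 := congrArg Complex.re h1
    rw [sq, Complex.mul_re, Complex.exp_ofReal_mul_I_re, Complex.exp_ofReal_mul_I_im,
      Real.sin_neg, Real.cos_neg, mul_comm Real.pi] at h2
    simp at h2
    nlinarith [Real.sin_sq_add_cos_sq (α * Real.pi)]
  have hFωa : ContinuousAt (fun z => F (ω * z)) a := by
    have : ContinuousAt F (ω * a) := by
      refine (aux_an l hlpos hltop c hc (ω * a) ?_).continuousAt
      intro n _
      exact hωne _ _ (hlpos n) (hlpos n₀)
    exact ContinuousAt.comp (f := fun z => ω * z) this (by fun_prop)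
  set c' : ℕ → ℂ := Function.update c n₀ 0 with hc'
  have hc's : Summable (fun n => ‖c' n‖ / l n) := by
    refine Summable.of_nonneg_of_le (fun n => div_nonneg (norm_nonneg _) (hlpos n).le) ?_ hc
    intro n
    have := hlpos n
    gcongr
    by_cases h : n = n₀
    · subst h; simp [hc']
    · simp [hc', h]
  have hHa : ContinuousAt (fun z => ∑' n, c' n / ((l n : ℂ) + z)) a := by
    refine (aux_an l hlpos hltop c' hc's a ?_).continuousAt
    intro n hn h
    have hnn : n ≠ n₀ := by rintro rfl; simp [hc'] at hn
    apply hnn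
    apply hl.injective
    have : (l n : ℂ) = l n₀ := by linear_combination h
    exact_mod_cast this
  have hsplit : ∀ z ∈ Bᶜ, ((l n₀ : ℂ) + z) * F (ω * z) =
      c n₀ + ((l n₀ : ℂ) + z) * ∑' n, c' n / ((l n : ℂ) + z) := by
    intro z hz
    have hzn : ∀ n, (l n : ℂ) + z ≠ 0 := fun n h =>
      hz (Or.inl ⟨n, (eq_neg_of_add_eq_zero_right h).symm⟩)
    have hs := (aux_diff l hlpos hltop c hc z (fun n _ => hzn n)).1
    have h1 : F z = c n₀ / ((l n₀ : ℂ) + z) + ∑' n, c' n / ((l n : ℂ) + z) := by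
      simp only [hF]
      rw [hs.tsum_eq_add_tsum_ite n₀]
      congr 1
      refine tsum_congr fun n => ?_
      by_cases h : n = n₀
      · subst h; simp [hc']
      · simp [hc', h]
    rw [← show F z = F (ω * z) from hEq hz, h1, mul_add, mul_div_cancel₀ _ (hzn n₀)]
  have hne : (nhdsWithin a Bᶜ).NeBot := by
    rw [← mem_closure_iff_nhdsWithin_neBot]
    exact hBc.dense_compl ℝ a
  have hidc : ContinuousAt (fun z : ℂ => (l n₀ : ℂ) + z) a := by fun_prop
  have hL := (hidc.mul hFωa).tendsto.mono_left (nhdsWithin_le_nhds (s := Bᶜ))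
  have hR := (continuousAt_const (y := c n₀) |>.add (hidc.mul hHa)).tendsto.mono_left
    (nhdsWithin_le_nhds (s := Bᶜ))
  have := tendsto_nhds_unique hL (hR.congr' (by
    filter_upwards [self_mem_nhdsWithin] with z hz
    exact (hsplit z hz).symm))
  simp [ha] at this
  exact hn₀ this.symm
end

section
/- Let X be a complex Banach space, let B : X → X be a bounded linear operator, let x ∈ X, let ℓ : X → ℂ be a continuous linear functional, let α ∈ (0,1), and let δ > 0 satisfy δ·‖B‖ < 1. Then the following two conditions are equivalent: (i) there exists ε ∈ (0, δ] such that ℓ((I + z e^{iαπ} B)⁻¹ (I + z e^{−iαπ} B)⁻¹ x) = 0 for every z ∈ ℂ with |z| < ε; (ii) ℓ(Bⁿ x) = 0 for every integer n ≥ 0 such that α(n+1) is not a positive integer. -/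
open Complex

theorem aux_geom {X : Type*} [NormedAddCommGroup X] [NormedSpace ℂ X] [CompleteSpace X]
    (B : X →L[ℂ] X) (w : ℂ) (h : ‖w‖ * ‖B‖ < 1) :
    IsUnit (1 + w • B) ∧ HasSum (fun n : ℕ => (-w) ^ n • B ^ n) (Ring.inverse (1 + w • B)) := by
  have hn : ‖(-w) • B‖ < 1 := by rw [norm_smul, norm_neg]; exact h
  have e : 1 + w • B = 1 - (-w) • B := by simp
  rw [e]
  refine ⟨isUnit_one_sub_of_norm_lt_one hn, ?_⟩
  have h2 := hasSum_geom_series_inverse _ hn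
  simpa only [smul_pow] using h2

theorem aux_res {X : Type*} [NormedAddCommGroup X] [NormedSpace ℂ X]
    (B : X →L[ℂ] X) (z u v : ℂ) (hu : IsUnit (1 + (z * u) • B)) (hv : IsUnit (1 + (z * v) • B)) :
    (u - v) • (Ring.inverse (1 + (z * u) • B) * Ring.inverse (1 + (z * v) • B)) =
      u • Ring.inverse (1 + (z * u) • B) - v • Ring.inverse (1 + (z * v) • B) := by
  have e : (u - v) • (1 : X →L[ℂ] X) = u • (1 + (z * v) • B) - v • (1 + (z * u) • B) := by
    module
  calc _ = Ring.inverse (1 + (z * u) • B) * ((u - v) • (1 : X →L[ℂ] X))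
            * Ring.inverse (1 + (z * v) • B) := by simp
    _ = u • (Ring.inverse (1 + (z * u) • B) * ((1 + (z * v) • B) * Ring.inverse (1 + (z * v) • B)))
        - v • ((Ring.inverse (1 + (z * u) • B) * (1 + (z * u) • B))
            * Ring.inverse (1 + (z * v) • B)) := by
          rw [e, mul_sub, sub_mul, mul_smul_comm, mul_smul_comm, smul_mul_assoc, smul_mul_assoc,
            mul_assoc]
    _ = _ := by rw [Ring.mul_inverse_cancel _ hv, Ring.inverse_mul_cancel _ hu, mul_one, one_mul]

theorem aux_sum {X : Type*} [NormedAddCommGroup X] [NormedSpace ℂ X] [CompleteSpace X]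
    (B : X →L[ℂ] X) (x : X) (ℓ : X →L[ℂ] ℂ) (z u v : ℂ) (hu : ‖u‖ = 1) (hv : ‖v‖ = 1)
    (h : ‖z‖ * ‖B‖ < 1) :
    HasSum (fun n : ℕ => z ^ n • ((-1) ^ n * (u ^ (n + 1) - v ^ (n + 1)) * ℓ ((B ^ n) x)))
      ((u - v) * ℓ ((Ring.inverse (1 + (z * u) • B) * Ring.inverse (1 + (z * v) • B)) x)) := by
  obtain ⟨iu, su⟩ := aux_geom B (z * u) (by simpa [hu] using h)
  obtain ⟨iv, sv⟩ := aux_geom B (z * v) (by simpa [hv] using h)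
  have s := (su.const_smul u).sub (sv.const_smul v)
  rw [← aux_res B z u v iu iv] at s
  have s2 := (s.mapL (ContinuousLinearMap.apply ℂ X x)).mapL ℓ
  convert s2 using 1
  · funext n
    simp only [ContinuousLinearMap.apply_apply,
      map_sub, map_smul, smul_eq_mul]
    rw [neg_pow (z * u), neg_pow (z * v)]
    ring
  · simp

theorem aux_exp (α : ℝ) (hα : 0 < α) (n : ℕ) :
    Complex.exp (Complex.I * (α : ℂ) * (Real.pi : ℂ)) ^ (n + 1)
      - Complex.exp (-(Complex.I * (α : ℂ) * (Real.pi : ℂ))) ^ (n + 1) = 0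
    ↔ ∃ m : ℕ, 0 < m ∧ α * (n + 1) = m := by
  have hpi : (Real.pi : ℂ) ≠ 0 := by exact_mod_cast Real.pi_ne_zero
  rw [← Complex.exp_nat_mul, ← Complex.exp_nat_mul, sub_eq_zero, Complex.exp_eq_exp_iff_exists_int]
  have key : ∀ k : ℤ, (((n + 1 : ℕ) : ℂ) * (Complex.I * (α : ℂ) * (Real.pi : ℂ)) =
      ((n + 1 : ℕ) : ℂ) * -(Complex.I * (α : ℂ) * (Real.pi : ℂ)) + k * (2 * Real.pi * Complex.I))
      ↔ α * (n + 1) = k := by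
    intro k
    have h2 : (2 * Real.pi * Complex.I : ℂ) ≠ 0 := by simp [hpi]
    rw [← sub_eq_zero, ← sub_eq_zero (a := α * (n + 1))]
    have e : ((n + 1 : ℕ) : ℂ) * (Complex.I * (α : ℂ) * (Real.pi : ℂ)) -
      (((n + 1 : ℕ) : ℂ) * -(Complex.I * (α : ℂ) * (Real.pi : ℂ)) + k * (2 * Real.pi * Complex.I))
      = (2 * Real.pi * Complex.I) * ((α * (n + 1) - k : ℝ) : ℂ) := by push_cast; ring
    rw [e, mul_eq_zero, or_iff_right h2, Complex.ofReal_eq_zero]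
  simp only [key]
  constructor
  · rintro ⟨k, hk⟩
    have hp : (0 : ℝ) < k := by rw [← hk]; positivity
    have hp' : 0 < k := by exact_mod_cast hp
    lift k to ℕ using hp'.le
    exact ⟨k, by exact_mod_cast hp', by exact_mod_cast hk⟩
  · rintro ⟨m, -, hm⟩
    exact ⟨m, by exact_mod_cast hm⟩

/-- Operator-theoretic formulation of Step 1 in the proof of Theorem 1.3:
`ℓ((I + z e^{iαπ}B)⁻¹(I + z e^{-iαπ}B)⁻¹ x)` vanishes for all small `z` iff
`ℓ(Bⁿx) = 0` for every `n ≥ 0` with `α(n+1)` not a positive integer. -/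
theorem evaluation_vanishing_iff_moments_vanish
    {X : Type*} [NormedAddCommGroup X] [NormedSpace ℂ X] [CompleteSpace X]
    (B : X →L[ℂ] X) (x : X) (ℓ : X →L[ℂ] ℂ)
    (α : ℝ) (hα : α ∈ Set.Ioo (0:ℝ) 1)
    (δ : ℝ) (hδ : 0 < δ) (hδB : δ * ‖B‖ < 1) :
    (∃ ε : ℝ, 0 < ε ∧ ε ≤ δ ∧ ∀ z : ℂ, ‖z‖ < ε →
      ℓ ((Ring.inverse (1 + (z * Complex.exp (Complex.I * (α : ℂ) * (Real.pi : ℂ))) • B) *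
          Ring.inverse (1 + (z * Complex.exp (-(Complex.I * (α : ℂ) * (Real.pi : ℂ)))) • B)) x)
        = 0)
    ↔ (∀ n : ℕ, ¬ (∃ m : ℕ, 0 < m ∧ α * (n + 1) = m) → ℓ ((B ^ n) x) = 0) := by
  obtain ⟨h0, h1⟩ := hα
  have hex := aux_exp α h0
  have hu : ‖Complex.exp (Complex.I * (α : ℂ) * (Real.pi : ℂ))‖ = 1 := by
    simp [Complex.norm_exp]
  have hv : ‖Complex.exp (-(Complex.I * (α : ℂ) * (Real.pi : ℂ)))‖ = 1 := by
    simp [Complex.norm_exp]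
  generalize Complex.exp (Complex.I * (α : ℂ) * (Real.pi : ℂ)) = u at *
  generalize Complex.exp (-(Complex.I * (α : ℂ) * (Real.pi : ℂ))) = v at *
  have huv : u - v ≠ 0 := by
    intro h
    obtain ⟨m, hm, he⟩ := (hex 0).1 (by simpa using h)
    have : (1 : ℝ) ≤ m := by exact_mod_cast hm
    simp at he
    linarith
  have hz : ∀ z : ℂ, ‖z‖ < δ → ‖z‖ * ‖B‖ < 1 := fun z h =>
    (mul_le_mul_of_nonneg_right h.le (norm_nonneg _)).trans_lt hδB
  constructor
  · rintro ⟨ε, hε, hεδ, H⟩ n hn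
    have hp : HasFPowerSeriesAt (0 : ℂ → ℂ) (FormalMultilinearSeries.ofScalars ℂ
        (fun n : ℕ => (-1) ^ n * (u ^ (n + 1) - v ^ (n + 1)) * ℓ ((B ^ n) x))) 0 := by
      rw [hasFPowerSeriesAt_iff]
      filter_upwards [Metric.ball_mem_nhds (0 : ℂ) hε] with z hzb
      have hzε : ‖z‖ < ε := by simpa using hzb
      have := aux_sum B x ℓ z u v hu hv (hz z (hzε.trans_le hεδ))
      rw [H z hzε, mul_zero] at this
      simpa [FormalMultilinearSeries.coeff_ofScalars] using this
    have h3 := congrArg (fun p => FormalMultilinearSeries.coeff p n) hp.eq_zero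
    simp only [FormalMultilinearSeries.coeff_ofScalars] at h3
    have h4 : (-1) ^ n * (u ^ (n + 1) - v ^ (n + 1)) * ℓ ((B ^ n) x) = 0 := by
      rw [h3]; simp [FormalMultilinearSeries.coeff]
    rcases mul_eq_zero.1 h4 with h5 | h5
    · rcases mul_eq_zero.1 h5 with h6 | h6
      · simp at h6
      · exact absurd ((hex n).1 h6) hn
    · exact h5
  · intro H
    refine ⟨δ, hδ, le_rfl, fun z hzδ => ?_⟩
    have s := aux_sum B x ℓ z u v hu hv (hz z hzδ)
    have hzero : (fun n : ℕ => z ^ n • ((-1) ^ n * (u ^ (n + 1) - v ^ (n + 1)) * ℓ ((B ^ n) x)))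
        = fun _ => 0 := by
      funext n
      by_cases hn : ∃ m : ℕ, 0 < m ∧ α * (n + 1) = m
      · rw [(hex n).2 hn]; simp
      · rw [H n hn]; simp
    rw [hzero] at s
    exact (mul_eq_zero.1 (s.unique hasSum_zero)).resolve_left huv
end
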